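/- Let C > 0 and let (g_s, r_s), s = 1, 2, …, be i.i.d. pairs chosen uniformly at random from G × R. Let τ be the smallest t such that the graph with vertex set G and edge set {{g_s, g_s r_s} : 1 ≤ s ≤ t} is connected. Then for every integer t > 8(C+3)·log(n)/γ̂, P[τ > t] ≤ 2·n^{−C}. -/

import Mathlib

open MeasureTheory

noncomputable section

/-- Uniform probability measure on a finset. -/
def unifOn {α : Type*} [MeasurableSpace α] (s : Finset α) : Measure α :=
  (s.card : ENNReal)⁻¹ • ∑ a ∈ s, Measure.dirac a

/-- Total variation distance between two measures. -/
def tvDist {α : Type*} [MeasurableSpace α] (μ ν : Measure α) : ℝ :=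
  ⨆ A : {A : Set α // MeasurableSet A}, ((μ A).toReal - (ν A).toReal)

variable (G : Type*) [Group G] [Fintype G] [DecidableEq G] [MeasurableSpace G]
  [DiscreteMeasurableSpace G]

/-- The simplex of probability vectors indexed by `G`. -/
def simplexG : Set (G → ℝ) := {x | (∀ g, 0 ≤ x g) ∧ ∑ g, x g = 1}

/-- The uniform (normalized `(n-1)`-dimensional Hausdorff) measure on the simplex. -/
def UG : Measure (G → ℝ) :=
  (μH[(Fintype.card G : ℝ) - 1] (simplexG G))⁻¹ •
    (μH[(Fintype.card G : ℝ) - 1]).restrict (simplexG G)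

/-- One step of the Gibbs sampler on the simplex from update datum `(g, r, λ)`. -/
def gibbsStepG (x : G → ℝ) (u : G × G × ℝ) : G → ℝ := fun h =>
  if h = u.1 then u.2.2 * (x u.1 + x (u.1 * u.2.1))
  else if h = u.1 * u.2.1 then (1 - u.2.2) * (x u.1 + x (u.1 * u.2.1))
  else x h

/-- Law of the random update datum: `g` uniform on `G`, `r` uniform on `R`,
`λ` uniform on `[0,1]`. -/
def driveG (R : Finset G) : Measure (G × G × ℝ) :=
  (unifOn (Finset.univ : Finset G)).prod
    ((unifOn R).prod ((volume : Measure ℝ).restrict (Set.Icc 0 1)))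

/-- Law of the Gibbs sampler after `T` steps started at `x`. -/
def lawG (R : Finset G) (x : G → ℝ) (T : ℕ) : Measure (G → ℝ) :=
  Measure.map (fun ω : Fin T → G × G × ℝ => (List.ofFn ω).foldl (gibbsStepG G) x)
    (Measure.pi fun _ => driveG G R)

/-- The transition matrix of the slowed simple random walk on `G`. -/
def KhatM (R : Finset G) : G → G → ℝ := fun z w =>
  if z = w then 1 - 2 / (Fintype.card G : ℝ)
  else if z⁻¹ * w ∈ R then 2 / ((Fintype.card G : ℝ) * R.card) else 0

/-- The spectral gap `γ̂ = 1 - λ̂₂` of `K̂`, with the second-largest eigenvalue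
expressed by the variational (Courant–Fischer) characterization. -/
def gapHat (R : Finset G) : ℝ :=
  1 - sSup {lam : ℝ | ∃ v : G → ℝ, ∑ g, v g = 0 ∧ ∑ g, (v g) ^ 2 = 1 ∧
    lam = ∑ g, ∑ h, v g * KhatM G R g h * v h}

/-- Expansion of the quadratic form of `K̂`. -/
lemma khat_row (R : Finset G) (hid : (1 : G) ∉ R) (v : G → ℝ) (g : G) :
    ∑ h, v g * KhatM G R g h * v h =
      (1 - 2 / (Fintype.card G : ℝ)) * v g ^ 2 +
        2 / ((Fintype.card G : ℝ) * R.card) * ∑ r ∈ R, v g * v (g * r) := by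
  rw [← Equiv.sum_comp (Equiv.mulLeft g)]
  have h1 : ∀ x : G, v g * KhatM G R g ((Equiv.mulLeft g) x) * v ((Equiv.mulLeft g) x) =
      (if x = 1 then (1 - 2 / (Fintype.card G : ℝ)) * v g ^ 2 else 0) +
      (if x ∈ R then 2 / ((Fintype.card G : ℝ) * R.card) * (v g * v (g * x)) else 0) := by
    intro x
    unfold KhatM
    by_cases hx : x = 1
    · subst hx
      simp [hid]
      ring
    · have : ¬ (g = g * x) := by
        intro h
        exact hx (by simpa using h)
      by_cases hR : x ∈ R
      · simp [hx, hR]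
        ring
      · simp [hx, hR]
  rw [Finset.sum_congr rfl (fun x _ => h1 x), Finset.sum_add_distrib]
  simp [Finset.sum_ite_mem, Finset.mul_sum]

/-- Dirichlet form identity. -/
lemma dirichlet_eq (R : Finset G) (hid : (1 : G) ∉ R) (hne : R.Nonempty) (v : G → ℝ) :
    ∑ g, v g ^ 2 - ∑ g, ∑ h, v g * KhatM G R g h * v h =
      1 / ((Fintype.card G : ℝ) * R.card) * ∑ g, ∑ r ∈ R, (v g - v (g * r)) ^ 2 := by
  have hn : (Fintype.card G : ℝ) ≠ 0 := by
    exact_mod_cast Fintype.card_ne_zero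
  have hm : (R.card : ℝ) ≠ 0 := by
    exact_mod_cast hne.card_pos.ne'
  rw [Finset.sum_congr rfl (fun g _ => khat_row G R hid v g)]
  have hs : ∑ g, ∑ r ∈ R, v (g * r) ^ 2 = R.card * ∑ g, v g ^ 2 := by
    rw [Finset.sum_comm]
    have hr : ∀ r ∈ R, ∑ g, v (g * r) ^ 2 = ∑ g, v g ^ 2 :=
      fun r _ => Equiv.sum_comp (Equiv.mulRight r) (fun g => v g ^ 2)
    rw [Finset.sum_congr rfl hr]
    simp
  have h2 : ∑ g, ∑ r ∈ R, (v g - v (g * r)) ^ 2 =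
      2 * R.card * ∑ g, v g ^ 2 - 2 * ∑ g, ∑ r ∈ R, v g * v (g * r) := by
    have : ∀ g : G, ∀ r : G, (v g - v (g * r)) ^ 2 =
      v g ^ 2 + v (g * r) ^ 2 - 2 * (v g * v (g * r)) := by intros; ring
    simp only [this, Finset.sum_add_distrib, Finset.sum_sub_distrib, hs, ← Finset.mul_sum]
    simp only [Finset.sum_const, nsmul_eq_mul, ← Finset.mul_sum]
    ring
  rw [h2, Finset.sum_add_distrib, ← Finset.mul_sum, ← Finset.mul_sum]
  field_simp
  ring

/-- The set of Rayleigh quotients is compact. -/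
lemma isCompact_rayleigh (R : Finset G) :
    IsCompact {lam : ℝ | ∃ v : G → ℝ, ∑ g, v g = 0 ∧ ∑ g, (v g) ^ 2 = 1 ∧
      lam = ∑ g, ∑ h, v g * KhatM G R g h * v h} := by
  have hS : IsCompact {v : G → ℝ | ∑ g, v g = 0 ∧ ∑ g, (v g) ^ 2 = 1} := by
    refine IsCompact.of_isClosed_subset
      (isCompact_univ_pi (fun _ : G => isCompact_Icc (a := (-1 : ℝ)) (b := 1))) ?_ ?_
    · apply IsClosed.inter
      · exact isClosed_eq (by fun_prop) (by fun_prop)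
      · exact isClosed_eq (by fun_prop) (by fun_prop)
    · rintro v ⟨_, hv⟩ g _
      have : v g ^ 2 ≤ 1 := by
        rw [← hv]
        exact Finset.single_le_sum (f := fun g => v g ^ 2) (fun i _ => sq_nonneg _)
          (Finset.mem_univ g)
      exact abs_le.mp ((sq_le_one_iff_abs_le_one _).mp this)
  have hf : Continuous (fun v : G → ℝ => ∑ g, ∑ h, v g * KhatM G R g h * v h) := by fun_prop
  convert hS.image hf using 1
  ext x
  simp only [Set.mem_setOf_eq, Set.mem_image]
  constructor
  · rintro ⟨v, h1, h2, h3⟩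
    exact ⟨v, ⟨h1, h2⟩, h3.symm⟩
  · rintro ⟨v, ⟨h1, h2⟩, h3⟩
    exact ⟨v, h1, h2, h3.symm⟩

/-- A function invariant under right translation by generators is constant. -/
lemma const_of_gen (R : Finset G) (hgen : Subgroup.closure (R : Set G) = ⊤) (v : G → ℝ)
    (h : ∀ g, ∀ r ∈ R, v g = v (g * r)) (x : G) : ∀ g, v (g * x) = v g := by
  have hx : x ∈ Subgroup.closure (R : Set G) := by
    rw [hgen]
    trivial
  induction hx using Subgroup.closure_induction with
  | mem y hy => exact fun g => (h g y hy).symm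
  | one => simp
  | mul y z _ _ hy hz =>
    intro g
    rw [← mul_assoc, hz, hy]
  | inv y _ hy =>
    intro g
    have := hy (g * y⁻¹)
    simpa using this.symm

lemma gapHat_pos (R : Finset G) (hid : (1 : G) ∉ R) (hne : R.Nonempty)
    (hgen : Subgroup.closure (R : Set G) = ⊤) : 0 < gapHat G R := by
  unfold gapHat
  rcases Set.eq_empty_or_nonempty {lam : ℝ | ∃ v : G → ℝ, ∑ g, v g = 0 ∧ ∑ g, (v g) ^ 2 = 1 ∧
      lam = ∑ g, ∑ h, v g * KhatM G R g h * v h} with he | hN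
  · rw [he]
    simp
  · obtain ⟨v, h0, h1, h2⟩ := (isCompact_rayleigh G R).sSup_mem hN
    rw [h2, ← h1, dirichlet_eq G R hid hne v]
    have hn : (0 : ℝ) < (Fintype.card G : ℝ) := by
      exact_mod_cast Fintype.card_pos
    have hm : (0 : ℝ) < (R.card : ℝ) := by
      exact_mod_cast hne.card_pos
    have hnn : ∀ g, 0 ≤ ∑ r ∈ R, (v g - v (g * r)) ^ 2 :=
      fun g => Finset.sum_nonneg (fun r _ => sq_nonneg _)
    apply mul_pos (by positivity)
    refine lt_of_le_of_ne (Finset.sum_nonneg (fun g _ => hnn g)) ?_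
    intro hz
    have hc : ∀ g, ∀ r ∈ R, v g = v (g * r) := by
      intro g r hr
      have e1 := (Finset.sum_eq_zero_iff_of_nonneg (fun g _ => hnn g)).mp hz.symm g
        (Finset.mem_univ g)
      have e2 := (Finset.sum_eq_zero_iff_of_nonneg (fun r _ => sq_nonneg _)).mp e1 r hr
      have := pow_eq_zero_iff (two_ne_zero) |>.mp e2
      linarith
    have hk : ∀ x, v x = v 1 := by
      intro x
      have := const_of_gen G R hgen v hc x 1
      simpa using this
    have hv : v 1 = 0 := by
      rw [Finset.sum_congr rfl (fun x _ => hk x)] at h0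
      simpa using h0
    rw [Finset.sum_congr rfl (fun x _ => by rw [hk x, hv])] at h1
    simp at h1

/-- Poincaré inequality. -/
lemma poincare (R : Finset G) (hid : (1 : G) ∉ R) (hne : R.Nonempty) (v : G → ℝ)
    (h0 : ∑ g, v g = 0) :
    gapHat G R * ∑ g, v g ^ 2 ≤
      1 / ((Fintype.card G : ℝ) * R.card) * ∑ g, ∑ r ∈ R, (v g - v (g * r)) ^ 2 := by
  rw [← dirichlet_eq G R hid hne v]
  have hS : 0 ≤ ∑ g, v g ^ 2 := Finset.sum_nonneg (fun g _ => sq_nonneg _)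
  rcases hS.eq_or_lt with hz | hp
  · have hv : ∀ g, v g = 0 := by
      intro g
      have e1 := (Finset.sum_eq_zero_iff_of_nonneg (fun g _ => sq_nonneg (v g))).mp hz.symm g
        (Finset.mem_univ g)
      exact pow_eq_zero_iff (two_ne_zero) |>.mp e1
    simp [hv]
  · set S := ∑ g, v g ^ 2 with hSdef
    have hsq : Real.sqrt S ^ 2 = S := Real.sq_sqrt hS
    have hne0 : Real.sqrt S ≠ 0 := (Real.sqrt_pos.mpr hp).ne'
    have hmem : (∑ g, ∑ h, v g * KhatM G R g h * v h) / S ∈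
        {lam : ℝ | ∃ v : G → ℝ, ∑ g, v g = 0 ∧ ∑ g, (v g) ^ 2 = 1 ∧
          lam = ∑ g, ∑ h, v g * KhatM G R g h * v h} := by
      refine ⟨fun g => v g / Real.sqrt S, ?_, ?_, ?_⟩
      · rw [← Finset.sum_div, h0, zero_div]
      · simp only [div_pow]
        rw [← Finset.sum_div, hsq, ← hSdef, div_self hp.ne']
      · rw [Finset.sum_div]
        refine Finset.sum_congr rfl fun g _ => ?_
        rw [Finset.sum_div]
        refine Finset.sum_congr rfl fun h _ => ?_
        nth_rewrite 1 [← hsq]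
        field_simp
    have hle := le_csSup (isCompact_rayleigh G R).bddAbove hmem
    rw [div_le_iff₀ hp] at hle
    unfold gapHat
    linarith

/-- Lower bound on the crossing count of a set. -/
lemma crossing_lower (R : Finset G) (hid : (1 : G) ∉ R) (hne : R.Nonempty) (A : Finset G) :
    gapHat G R * ((A.card : ℝ) * (Fintype.card G - A.card) / Fintype.card G) ≤
      1 / ((Fintype.card G : ℝ) * R.card) *
        ∑ g, ∑ r ∈ R, (if (g ∈ A ↔ g * r ∈ A) then (0 : ℝ) else 1) := by
  have hn : (Fintype.card G : ℝ) ≠ 0 := by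
    exact_mod_cast Fintype.card_ne_zero
  have hp := poincare G R hid hne
    (fun g => (if g ∈ A then (1 : ℝ) else 0) - A.card / Fintype.card G) (by
      rw [Finset.sum_sub_distrib]
      simp
      field_simp
      simp)
  have e1 : ∑ g : G, ((if g ∈ A then (1 : ℝ) else 0) - A.card / Fintype.card G) ^ 2 =
      (A.card : ℝ) * (Fintype.card G - A.card) / Fintype.card G := by
    have : ∀ g : G, ((if g ∈ A then (1 : ℝ) else 0) - A.card / Fintype.card G) ^ 2 =
      (if g ∈ A then (1 : ℝ) else 0) * (1 - 2 * (A.card / Fintype.card G)) +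
        (A.card / Fintype.card G : ℝ) ^ 2 := by
      intro g
      split_ifs <;> ring
    simp only [this, Finset.sum_add_distrib, ← Finset.sum_mul]
    simp
    field_simp
    ring
  rw [e1] at hp
  refine hp.trans (le_of_eq ?_)
  congr 1
  refine Finset.sum_congr rfl fun g _ => Finset.sum_congr rfl fun r _ => ?_
  by_cases h1 : g ∈ A <;> by_cases h2 : g * r ∈ A <;> simp only [h1, h2] <;> norm_num <;> ring_nf <;> simp

instance unifOn_finite {α : Type*} [MeasurableSpace α] (s : Finset α) [Nonempty s] :
    IsProbabilityMeasure (unifOn s) := by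
  constructor
  have : (s.card : ENNReal) ≠ 0 := by
    have : s.card ≠ 0 := by
      rw [Finset.card_ne_zero]
      exact Finset.nonempty_coe_sort.mp inferInstance
    exact_mod_cast this
  simp [unifOn]
  exact ENNReal.inv_mul_cancel this (by simp)

lemma lintegral_unifOn {α : Type*} [MeasurableSpace α] [DiscreteMeasurableSpace α]
    (s : Finset α) (f : α → ENNReal) :
    ∫⁻ x, f x ∂(unifOn s) = (s.card : ENNReal)⁻¹ * ∑ a ∈ s, f a := by
  unfold unifOn
  rw [lintegral_smul_measure, lintegral_finsetSum_measure, smul_eq_mul]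
  congr 1
  refine Finset.sum_congr rfl fun a _ => ?_
  exact lintegral_dirac' a (Measurable.of_discrete)

/-- Probability that one edge crosses `A`. -/
lemma crossing_prob (R : Finset G) (hne : R.Nonempty) (A : Finset G) :
    ((unifOn (Finset.univ : Finset G)).prod (unifOn R))
        {p : G × G | ¬ (p.1 ∈ A ↔ p.1 * p.2 ∈ A)} =
      ENNReal.ofReal (1 / ((Fintype.card G : ℝ) * R.card) *
        ∑ g, ∑ r ∈ R, (if (g ∈ A ↔ g * r ∈ A) then (0 : ℝ) else 1)) := by
  have : Nonempty R := hne.to_subtype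
  have hn : (0 : ℝ) < (Fintype.card G : ℝ) := by
    exact_mod_cast Fintype.card_pos
  have hm : (0 : ℝ) < (R.card : ℝ) := by
    exact_mod_cast hne.card_pos
  rw [Measure.prod_apply (MeasurableSet.of_discrete), lintegral_unifOn]
  have h1 : ∀ g : G, unifOn R (Prod.mk g ⁻¹' {p : G × G | ¬ (p.1 ∈ A ↔ p.1 * p.2 ∈ A)}) =
      (R.card : ENNReal)⁻¹ *
        ENNReal.ofReal (∑ r ∈ R, (if (g ∈ A ↔ g * r ∈ A) then (0 : ℝ) else 1)) := by
    intro g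
    rw [← lintegral_indicator_one (MeasurableSet.of_discrete), lintegral_unifOn,
      ENNReal.ofReal_sum_of_nonneg (fun r _ => by split_ifs <;> simp)]
    congr 1
    refine Finset.sum_congr rfl fun r _ => ?_
    by_cases h : (g ∈ A ↔ g * r ∈ A) <;> simp [Set.indicator, h]
  rw [Finset.sum_congr rfl (fun g _ => h1 g), ← Finset.mul_sum,
    ← ENNReal.ofReal_sum_of_nonneg
      (fun g _ => Finset.sum_nonneg (fun r _ => by split_ifs <;> simp)),
    ENNReal.ofReal_mul (by positivity), ← mul_assoc]
  congr 1
  rw [one_div, ENNReal.ofReal_inv_of_pos (by positivity), ENNReal.ofReal_mul hn.le]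
  simp only [ENNReal.ofReal_natCast, Finset.card_univ]
  rw [ENNReal.mul_inv] <;> simp

/-- Probability that no edge crosses `A`. -/
lemma nocross_prob (R : Finset G) (hid : (1 : G) ∉ R) (hne : R.Nonempty) (A : Finset G)
    (hA : 2 * A.card ≤ Fintype.card G) (hg : 0 < gapHat G R) (t : ℕ) :
    (Measure.pi fun _ : Fin t => (unifOn (Finset.univ : Finset G)).prod (unifOn R))
        {ω | ∀ s, ((ω s).1 ∈ A ↔ (ω s).1 * (ω s).2 ∈ A)} ≤
      ENNReal.ofReal (Real.exp (-(gapHat G R * t / 2)) ^ A.card) := by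
  have : Nonempty R := hne.to_subtype
  have : Nonempty (Finset.univ : Finset G) := Finset.univ_nonempty.to_subtype
  have hn : (0 : ℝ) < (Fintype.card G : ℝ) := by
    exact_mod_cast Fintype.card_pos
  have hset : {ω : Fin t → G × G | ∀ s, ((ω s).1 ∈ A ↔ (ω s).1 * (ω s).2 ∈ A)} =
      Set.univ.pi fun _ => {p : G × G | ¬ (p.1 ∈ A ↔ p.1 * p.2 ∈ A)}ᶜ := by
    ext ω
    simp
  rw [hset, Measure.pi_pi]
  simp only [Finset.prod_const, Finset.card_univ, Fintype.card_fin]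
  rw [prob_compl_eq_one_sub (MeasurableSet.of_discrete), crossing_prob G R hne A]
  have hl := crossing_lower G R hid hne A
  set p := 1 / ((Fintype.card G : ℝ) * R.card) *
        ∑ g, ∑ r ∈ R, (if (g ∈ A ↔ g * r ∈ A) then (0 : ℝ) else 1) with hp
  have hp0 : 0 ≤ p := by
    apply mul_nonneg (by positivity)
    exact Finset.sum_nonneg (fun g _ => Finset.sum_nonneg (fun r _ => by split_ifs <;> simp))
  have hpk : gapHat G R * A.card / 2 ≤ p := by
    refine le_trans ?_ hl
    rw [mul_div_assoc]
    apply mul_le_mul_of_nonneg_left _ hg.le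
    rw [div_le_div_iff₀ (by norm_num) hn]
    have h2 : (2 : ℝ) * A.card ≤ Fintype.card G := by exact_mod_cast hA
    have h3 : (0 : ℝ) ≤ A.card := by positivity
    nlinarith
  have hstep : 1 - ENNReal.ofReal p ≤ ENNReal.ofReal (Real.exp (-p)) := by
    rw [← ENNReal.ofReal_one, ← ENNReal.ofReal_sub _ hp0]
    apply ENNReal.ofReal_le_ofReal
    have := Real.add_one_le_exp (-p)
    linarith
  refine (pow_le_pow_left₀ (zero_le) hstep t).trans ?_
  rw [← ENNReal.ofReal_pow (Real.exp_pos _).le]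
  apply ENNReal.ofReal_le_ofReal
  rw [← Real.exp_nat_mul, ← Real.exp_nat_mul]
  apply Real.exp_le_exp.mpr
  have ht : (0 : ℝ) ≤ t := by positivity
  nlinarith [mul_le_mul_of_nonneg_left hpk ht]

/-- A disconnected graph has an uncrossed small nonempty set. -/
lemma exists_uncrossed (t : ℕ) (ω : Fin t → G × G)
    (h : ¬ (SimpleGraph.fromRel fun a b =>
            ∃ s, (ω s).1 = a ∧ (ω s).1 * (ω s).2 = b).Connected) :
    ∃ A : Finset G, A.Nonempty ∧ 2 * A.card ≤ Fintype.card G ∧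
      ∀ s, ((ω s).1 ∈ A ↔ (ω s).1 * (ω s).2 ∈ A) := by
  classical
  set H := (SimpleGraph.fromRel fun a b : G =>
            ∃ s, (ω s).1 = a ∧ (ω s).1 * (ω s).2 = b) with hH
  have hpre : ¬ H.Preconnected := fun hp => h ⟨hp⟩
  unfold SimpleGraph.Preconnected at hpre
  push Not at hpre
  obtain ⟨u, w, huw⟩ := hpre
  have hadj : ∀ s, H.Reachable (ω s).1 ((ω s).1 * (ω s).2) := by
    intro s
    by_cases he : (ω s).1 = (ω s).1 * (ω s).2
    · rw [← he]
    · apply SimpleGraph.Adj.reachable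
      rw [hH, SimpleGraph.fromRel_adj]
      exact ⟨he, Or.inl ⟨s, rfl, rfl⟩⟩
  set A : Finset G := Finset.univ.filter (fun x => H.Reachable u x) with hA
  have hcr : ∀ s, ((ω s).1 ∈ A ↔ (ω s).1 * (ω s).2 ∈ A) := by
    intro s
    simp only [hA, Finset.mem_filter, Finset.mem_univ, true_and]
    exact ⟨fun h => h.trans (hadj s), fun h => h.trans (hadj s).symm⟩
  by_cases hc : 2 * A.card ≤ Fintype.card G
  · exact ⟨A, ⟨u, by simp [hA]⟩, hc, hcr⟩
  · refine ⟨Aᶜ, ⟨w, by simp [hA, huw]⟩, ?_, ?_⟩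
    · rw [Finset.card_compl]
      omega
    · intro s
      simp only [Finset.mem_compl]
      exact not_congr (hcr s)

/-- Connectedness time for the Cayley-edge random graph process: with `(g_s, r_s)` i.i.d.
uniform on `G × R`, the graph with edges `{g_s, g_s r_s}` for `s ≤ t` is connected,
except with probability at most `2 n^{-C}`, whenever `t > 8 (C + 3) log n / γ̂`. -/
theorem cayley_edge_process_connectedness
    (R : Finset G) (hsym : ∀ r ∈ R, r⁻¹ ∈ R) (hid : (1 : G) ∉ R) (hne : R.Nonempty)
    (hgen : Subgroup.closure (R : Set G) = ⊤)
    (C : ℝ) (hC : 0 < C)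
    (t : ℕ) (ht : 8 * (C + 3) * Real.log (Fintype.card G) / gapHat G R < (t : ℝ)) :
    (Measure.pi fun _ : Fin t => (unifOn (Finset.univ : Finset G)).prod (unifOn R))
        {ω | ¬ (SimpleGraph.fromRel fun a b =>
            ∃ s, (ω s).1 = a ∧ (ω s).1 * (ω s).2 = b).Connected} ≤
      ENNReal.ofReal (2 * (Fintype.card G : ℝ) ^ (-C)) := by
  classical
  have hg := gapHat_pos G R hid hne hgen
  have hn1 : (2 : ℝ) ≤ (Fintype.card G : ℝ) := by
    obtain ⟨r, hr⟩ := hne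
    have : 1 < Fintype.card G := Fintype.one_lt_card_iff.mpr
      ⟨r, 1, fun h => hid (h ▸ hr)⟩
    exact_mod_cast this
  set n : ℝ := (Fintype.card G : ℝ) with hn
  have hn0 : 0 < n := by linarith
  have hlog : 0 < Real.log n := Real.log_pos (by linarith)
  set x : ℝ := Real.exp (-(gapHat G R * t / 2)) with hx
  have hx0 : 0 < x := Real.exp_pos _
  rw [div_lt_iff₀ hg] at ht
  have hxle : n * x ≤ n ^ (-C) := by
    rw [Real.rpow_def_of_pos hn0, hx]
    nth_rewrite 1 [← Real.exp_log hn0]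
    rw [← Real.exp_add]
    apply Real.exp_le_exp.mpr
    nlinarith [mul_pos hC hlog]
  have hle1 : n ^ (-C) ≤ 1 := Real.rpow_le_one_of_one_le_of_nonpos (by linarith) (by linarith)
  have hsum : ∑ A ∈ (Finset.univ : Finset G).powerset.erase ∅, x ^ A.card ≤ 2 * n ^ (-C) := by
    have h1 : ∑ A ∈ (Finset.univ : Finset G).powerset, x ^ A.card = (1 + x) ^ Fintype.card G := by
      have := Finset.prod_one_add (f := fun _ : G => x) (Finset.univ : Finset G)
      simpa using this.symm
    have h2 := Finset.add_sum_erase (Finset.univ : Finset G).powerset (fun A => x ^ A.card)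
      (Finset.empty_mem_powerset _)
    rw [h1] at h2
    simp only [Finset.card_empty, pow_zero] at h2
    have h3 : (1 + x) ^ Fintype.card G ≤ Real.exp (n * x) := by
      rw [hn, Real.exp_nat_mul]
      apply pow_le_pow_left₀ (by linarith)
      linarith [Real.add_one_le_exp x]
    have h4 : |Real.exp (n * x) - 1| ≤ 2 * |n * x| := by
      apply Real.abs_exp_sub_one_le
      rw [abs_of_pos (by positivity)]
      linarith
    rw [abs_of_pos (by positivity : 0 < n * x)] at h4
    have h5 := le_abs_self (Real.exp (n * x) - 1)
    linarith
  refine le_trans ?_ (ENNReal.ofReal_le_ofReal hsum)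
  rw [ENNReal.ofReal_sum_of_nonneg (fun A _ => by positivity)]
  set P := (Finset.univ : Finset G).powerset.erase ∅ with hP
  set Q := P.filter (fun A => 2 * A.card ≤ Fintype.card G) with hQ
  calc _ ≤ (Measure.pi fun _ : Fin t => (unifOn (Finset.univ : Finset G)).prod (unifOn R))
        (⋃ A ∈ Q, {ω | ∀ s, ((ω s).1 ∈ A ↔ (ω s).1 * (ω s).2 ∈ A)}) := by
        apply measure_mono
        intro ω hω
        obtain ⟨A, hA1, hA2, hA3⟩ := exists_uncrossed G t ω hω
        simp only [Set.mem_iUnion]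
        refine ⟨A, ?_, hA3⟩
        simp [hQ, hP, hA2, hA1.ne_empty]
    _ ≤ ∑ A ∈ Q, (Measure.pi fun _ : Fin t =>
          (unifOn (Finset.univ : Finset G)).prod (unifOn R))
            {ω | ∀ s, ((ω s).1 ∈ A ↔ (ω s).1 * (ω s).2 ∈ A)} :=
        measure_biUnion_finset_le _ _
    _ ≤ ∑ A ∈ Q, ENNReal.ofReal (x ^ A.card) := by
        apply Finset.sum_le_sum
        intro A hA
        exact nocross_prob G R hid hne A (Finset.mem_filter.mp hA).2 hg t
    _ ≤ ∑ A ∈ P, ENNReal.ofReal (x ^ A.card) :=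
        Finset.sum_le_sum_of_subset (Finset.filter_subset _ _)

end
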